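/- Let M̃ ⊂ [0,1] be a measurable set of positive Lebesgue measure, and let h be the characteristic function of M̃ × {0} ⊂ ∂Q where Q = (0,1)². Then the infimum inf { ∫_Q |Dw| : w ∈ BV(Q), tr_{∂Q} w = h } is not attained. -/

import Mathlib

noncomputable section
open MeasureTheory Filter Set Topology

/-- The set of test values for the variation of `u` in direction `e` on `Ω`:
numbers `∫_Ω u ∂_e ξ` for scalar test functions `ξ ∈ C¹_c(Ω)` with `|ξ| ≤ 1`. -/
def dirVarSet (Ω : Set (ℝ × ℝ)) (u : ℝ × ℝ → ℝ) (e : ℝ × ℝ) : Set ℝ :=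
  {v | ∃ ξ : ℝ × ℝ → ℝ, ContDiff ℝ 1 ξ ∧ HasCompactSupport ξ ∧ tsupport ξ ⊆ Ω ∧
      (∀ x, |ξ x| ≤ 1) ∧ v = ∫ x in Ω, u x * fderiv ℝ ξ x e}

/-- The variation `∫_Ω |D_e u|` of `u` in direction `e`. -/
def dirVar (Ω : Set (ℝ × ℝ)) (u : ℝ × ℝ → ℝ) (e : ℝ × ℝ) : ℝ :=
  sSup (dirVarSet Ω u e)

/-- Test values for the total variation of `u` on `Ω`: numbers `∫_Ω u div ξ` for
vector fields `ξ ∈ C¹_c(Ω, ℝ²)` with (Euclidean) `|ξ| ≤ 1`. -/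
def varSet (Ω : Set (ℝ × ℝ)) (u : ℝ × ℝ → ℝ) : Set ℝ :=
  {v | ∃ ξ : ℝ × ℝ → ℝ × ℝ, ContDiff ℝ 1 ξ ∧ HasCompactSupport ξ ∧ tsupport ξ ⊆ Ω ∧
      (∀ x, (ξ x).1 ^ 2 + (ξ x).2 ^ 2 ≤ 1) ∧
      v = ∫ x in Ω, (u x * (fderiv ℝ ξ x (1, 0)).1 + u x * (fderiv ℝ ξ x (0, 1)).2)}

/-- The total variation `∫_Ω |Du|`. -/
def totalVar (Ω : Set (ℝ × ℝ)) (u : ℝ × ℝ → ℝ) : ℝ := sSup (varSet Ω u)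

/-- `u` is of bounded variation on `Ω`. -/
def IsBVOn (Ω : Set (ℝ × ℝ)) (u : ℝ × ℝ → ℝ) : Prop :=
  IntegrableOn u Ω volume ∧ BddAbove (varSet Ω u)

/-- The open unit square `Q = (0,1)²`. -/
def unitSquare : Set (ℝ × ℝ) := Ioo (0 : ℝ) 1 ×ˢ Ioo (0 : ℝ) 1

/-- `w` has boundary trace `1_{M̃ × {0}}` on `∂Q`: the horizontal/vertical slices of `w`
converge in `L¹` to the indicator of `M̃` on the bottom side and to `0` on the three
other sides. -/
def HasSquareTraceIndicator (w : ℝ × ℝ → ℝ) (M : Set ℝ) : Prop :=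
  Tendsto (fun t : ℝ => ∫ x in (0:ℝ)..1, |w (x, t) - M.indicator 1 x|) (𝓝[>] (0:ℝ)) (𝓝 0) ∧
  Tendsto (fun t : ℝ => ∫ x in (0:ℝ)..1, |w (x, t)|) (𝓝[<] (1:ℝ)) (𝓝 0) ∧
  Tendsto (fun s : ℝ => ∫ y in (0:ℝ)..1, |w (s, y)|) (𝓝[>] (0:ℝ)) (𝓝 0) ∧
  Tendsto (fun s : ℝ => ∫ y in (0:ℝ)..1, |w (s, y)|) (𝓝[<] (1:ℝ)) (𝓝 0)

/-- A smooth nonnegative kernel of unit mass supported in `[1/n, 2/n]`. -/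
def edgeKernel (n : ℕ) (x : ℝ) : ℝ := n * deriv Real.smoothTransition (n * x - 1)

/-- A smooth cutoff supported in `[1/n, 1 - 1/n]`. -/
def edgeCutoff (n : ℕ) (x : ℝ) : ℝ :=
  Real.smoothTransition (n * x - 1) + Real.smoothTransition (n * (1 - x) - 1) - 1

lemma contDiff_edgeKernel (n : ℕ) : ContDiff ℝ 1 (edgeKernel n) := by
  have h : ContDiff ℝ 1 (deriv Real.smoothTransition) := by
    have h2 : ContDiff ℝ (1 + 1) Real.smoothTransition := Real.smoothTransition.contDiff (n := 2)
    exact (contDiff_succ_iff_deriv.1 h2).2.2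
  unfold edgeKernel
  exact contDiff_const.mul (h.comp (by fun_prop))

lemma contDiff_edgeCutoff (n : ℕ) : ContDiff ℝ 1 (edgeCutoff n) := by
  have h : ContDiff ℝ 1 Real.smoothTransition := Real.smoothTransition.contDiff (n := 1)
  unfold edgeCutoff
  exact ((h.comp (by fun_prop)).add (h.comp (by fun_prop))).sub contDiff_const

lemma hasDerivAt_smoothTransition_rescale (n : ℕ) (x : ℝ) :
    HasDerivAt (fun y : ℝ => Real.smoothTransition (n * y - 1)) (edgeKernel n x) x := by
  have h : Differentiable ℝ Real.smoothTransition :=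
    (Real.smoothTransition.contDiff (n := 1)).differentiable (by simp)
  have h1 : HasDerivAt (fun y : ℝ => (n : ℝ) * y - 1) n x := by
    simpa using ((hasDerivAt_id x).const_mul (n : ℝ)).sub_const 1
  have := (h _).hasDerivAt.comp x h1
  simpa [edgeKernel, Function.comp_def, mul_comm] using this

lemma hasDerivAt_edgeCutoff (n : ℕ) (x : ℝ) :
    HasDerivAt (edgeCutoff n) (edgeKernel n x - edgeKernel n (1 - x)) x := by
  have h1 : HasDerivAt (fun y : ℝ => 1 - y) (-1) x := by
    simpa using (hasDerivAt_id x).const_sub 1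
  have h2 := (hasDerivAt_smoothTransition_rescale n (1 - x)).comp x h1
  have h3 := ((hasDerivAt_smoothTransition_rescale n x).add h2).sub_const 1
  exact h3.congr_deriv (by ring)

lemma edgeKernel_nonneg (n : ℕ) (x : ℝ) : 0 ≤ edgeKernel n x :=
  mul_nonneg n.cast_nonneg Real.smoothTransition.monotone.deriv_nonneg

lemma edgeKernel_of_lt_one {n : ℕ} {x : ℝ} (h : n * x < 1) : edgeKernel n x = 0 := by
  have : Real.smoothTransition =ᶠ[𝓝 (n * x - 1)] fun _ => 0 := by
    filter_upwards [Iio_mem_nhds (show n * x - 1 < 0 by linarith)] with y hy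
    exact Real.smoothTransition.zero_of_nonpos (le_of_lt hy)
  simp [edgeKernel, this.deriv_eq]

lemma edgeKernel_of_two_lt {n : ℕ} {x : ℝ} (h : 2 < n * x) : edgeKernel n x = 0 := by
  have : Real.smoothTransition =ᶠ[𝓝 (n * x - 1)] fun _ => 1 := by
    filter_upwards [Ioi_mem_nhds (show 1 < n * x - 1 by linarith)] with y hy
    exact Real.smoothTransition.one_of_one_le (le_of_lt hy)
  simp [edgeKernel, this.deriv_eq]

lemma abs_edgeCutoff_le (n : ℕ) (x : ℝ) : |edgeCutoff n x| ≤ 1 := by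
  have h1 := Real.smoothTransition.nonneg (n * x - 1)
  have h2 := Real.smoothTransition.le_one (n * x - 1)
  have h3 := Real.smoothTransition.nonneg (n * (1 - x) - 1)
  have h4 := Real.smoothTransition.le_one (n * (1 - x) - 1)
  rw [edgeCutoff, abs_le]
  constructor <;> linarith

lemma edgeCutoff_eq_zero_of_notMem {n : ℕ} (hn : 4 ≤ n) {x : ℝ}
    (hx : x ∉ Icc (1 / n : ℝ) (1 - 1 / n)) : edgeCutoff n x = 0 := by
  have hn' : (4 : ℝ) ≤ n := by exact_mod_cast hn
  have hn0 : (0 : ℝ) < n := by linarith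
  have hq : (n : ℝ) * (1 / n) = 1 := by field_simp
  rcases lt_or_ge x (1 / n) with h | h
  · have h1 : (n : ℝ) * x < 1 := by nlinarith
    rw [edgeCutoff, Real.smoothTransition.zero_of_nonpos (by linarith),
      Real.smoothTransition.one_of_one_le (by nlinarith)]
    ring
  · have h' : 1 - 1 / n < x := by
      by_contra hc
      exact hx ⟨h, not_lt.1 hc⟩
    have h1 : (n : ℝ) * (1 - x) < 1 := by nlinarith
    rw [edgeCutoff, Real.smoothTransition.zero_of_nonpos (x := n * (1 - x) - 1) (by linarith),
      Real.smoothTransition.one_of_one_le (by nlinarith)]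
    ring

lemma tendsto_edgeCutoff {x : ℝ} (hx : x ∈ Ioo (0 : ℝ) 1) :
    Tendsto (fun n : ℕ => edgeCutoff n x) atTop (𝓝 1) := by
  refine tendsto_const_nhds.congr' ?_
  have h1 := (tendsto_natCast_atTop_atTop (R := ℝ)).atTop_mul_const hx.1
  have h2 := (tendsto_natCast_atTop_atTop (R := ℝ)).atTop_mul_const (sub_pos.2 hx.2)
  filter_upwards [h1.eventually_ge_atTop 2, h2.eventually_ge_atTop 2] with n hn1 hn2
  rw [edgeCutoff, Real.smoothTransition.one_of_one_le (by linarith),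
    Real.smoothTransition.one_of_one_le (by linarith)]
  ring

lemma integral_edgeKernel {n : ℕ} (hn : 2 ≤ n) : ∫ x in Ioo (0 : ℝ) 1, edgeKernel n x = 1 := by
  have hn' : (2 : ℝ) ≤ n := by exact_mod_cast hn
  rw [← integral_Ioc_eq_integral_Ioo, ← intervalIntegral.integral_of_le zero_le_one,
    intervalIntegral.integral_eq_sub_of_hasDerivAt
      (fun x _ => hasDerivAt_smoothTransition_rescale n x)
      ((contDiff_edgeKernel n).continuous.intervalIntegrable _ _),
    Real.smoothTransition.one_of_one_le (by linarith),
    Real.smoothTransition.zero_of_nonpos (by linarith)]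
  ring

lemma exists_edgeKernel_le (n : ℕ) : ∃ C, 0 < C ∧ ∀ x, |edgeKernel n x| ≤ C := by
  by_cases hn : n = 0
  · exact ⟨1, one_pos, fun x => by simp [edgeKernel, hn]⟩
  have hn0 : (0 : ℝ) < n := by positivity
  obtain ⟨C, hC⟩ := (isCompact_Icc (a := (1 / n : ℝ)) (b := 2 / n)).exists_bound_of_continuousOn
    (contDiff_edgeKernel n).continuous.continuousOn
  refine ⟨|C| + 1, by positivity, fun x => ?_⟩
  rcases lt_or_ge (n * x) 1 with h | h
  · rw [edgeKernel_of_lt_one h]; simp; positivity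
  rcases lt_or_ge 2 (n * x) with h' | h'
  · rw [edgeKernel_of_two_lt h']; simp; positivity
  have := hC x ⟨by rwa [div_le_iff₀' hn0], by rwa [le_div_iff₀' hn0]⟩
  rw [Real.norm_eq_abs] at this
  linarith [le_abs_self C]

lemma integrableOn_mul_edgeKernel {F : ℝ → ℝ} (hF : IntegrableOn F (Ioo 0 1)) (n : ℕ) :
    IntegrableOn (fun x => F x * edgeKernel n x) (Ioo 0 1) := by
  obtain ⟨C, -, hC⟩ := exists_edgeKernel_le n
  exact Integrable.mul_bdd (c := C) hF
    (contDiff_edgeKernel n).continuous.aestronglyMeasurable (ae_of_all _ hC)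

lemma tendsto_integral_mul_edgeKernel {F : ℝ → ℝ} {a : ℝ} (hF : IntegrableOn F (Ioo 0 1))
    (ha : Tendsto F (𝓝[>] 0 ⊓ ae volume) (𝓝 a)) :
    Tendsto (fun n => ∫ x in Ioo (0 : ℝ) 1, F x * edgeKernel n x) atTop (𝓝 a) := by
  rw [Metric.tendsto_atTop']
  intro ε hε
  have hev := ha.eventually (Metric.closedBall_mem_nhds a (half_pos hε))
  obtain ⟨s, hs, t, ht, hst⟩ := Filter.eventually_inf.1 hev
  obtain ⟨δ, hδ, hsub⟩ := mem_nhdsGT_iff_exists_Ioo_subset.1 hs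
  have hδ' : (0 : ℝ) < δ := hδ
  obtain ⟨N, hN⟩ := exists_nat_gt (2 / δ)
  refine ⟨N + 2, fun n hn => ?_⟩
  have hnN : (N : ℝ) ≤ n := by exact_mod_cast (by omega : N ≤ n)
  have h2 : 2 < n * δ := by
    rw [div_lt_iff₀ hδ'] at hN
    nlinarith
  have hk := integral_edgeKernel (n := n) (by omega)
  have hkint : IntegrableOn (edgeKernel n) (Ioo 0 1) := by
    simpa using integrableOn_mul_edgeKernel (F := fun _ => 1) (by simp) n
  have heq : (∫ x in Ioo (0 : ℝ) 1, F x * edgeKernel n x) - a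
      = ∫ x in Ioo (0 : ℝ) 1, (F x - a) * edgeKernel n x := by
    simp_rw [sub_mul]
    rw [integral_sub (integrableOn_mul_edgeKernel hF n) (hkint.const_mul a),
      integral_const_mul, hk, mul_one]
  rw [Real.dist_eq, heq, ← Real.norm_eq_abs]
  calc _ ≤ ∫ x in Ioo (0 : ℝ) 1, ε / 2 * edgeKernel n x := by
        refine norm_integral_le_of_norm_le (hkint.const_mul _) ?_
        filter_upwards [ae_restrict_mem measurableSet_Ioo, ae_restrict_of_ae ht] with x hx hxt
        rw [norm_mul, Real.norm_of_nonneg (edgeKernel_nonneg n x)]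
        rcases lt_or_ge x δ with h | h
        · have := hst x ⟨hsub ⟨hx.1, h⟩, hxt⟩
          rw [Real.dist_eq] at this
          exact mul_le_mul_of_nonneg_right this (edgeKernel_nonneg n x)
        · rw [edgeKernel_of_two_lt (h2.trans_le (by gcongr))]
          simp
    _ = ε / 2 := by rw [integral_const_mul, hk, mul_one]
    _ < ε := half_lt_self hε

lemma tendsto_reflect_nhdsGT_inf_ae :
    Tendsto (fun x : ℝ => 1 - x) (𝓝[>] 0 ⊓ ae volume) (𝓝[<] 1 ⊓ ae volume) := by
  refine Tendsto.inf ?_ ?_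
  · refine tendsto_nhdsWithin_iff.2 ⟨?_, ?_⟩
    · exact ((continuous_const.sub continuous_id).tendsto' 0 1 (by simp)).mono_left
        nhdsWithin_le_nhds
    · filter_upwards [self_mem_nhdsWithin] with x hx
      simpa using hx
  · exact (Measure.measurePreserving_sub_left volume (1 : ℝ)).quasiMeasurePreserving.tendsto_ae

lemma integrableOn_reflect {F : ℝ → ℝ} (hF : IntegrableOn F (Ioo 0 1)) :
    IntegrableOn (fun x => F (1 - x)) (Ioo 0 1) := by
  have h := (Measure.measurePreserving_sub_left volume (1 : ℝ)).integrableOn_comp_preimage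
    (f := F) (s := Ioo 0 1) (Homeomorph.subLeft (1 : ℝ)).measurableEmbedding
  simpa [Function.comp_def] using h.2 hF

lemma integral_reflect (F : ℝ → ℝ) :
    ∫ x in Ioo (0 : ℝ) 1, F (1 - x) = ∫ x in Ioo (0 : ℝ) 1, F x := by
  rw [← integral_Ioc_eq_integral_Ioo, ← integral_Ioc_eq_integral_Ioo,
    ← intervalIntegral.integral_of_le zero_le_one, ← intervalIntegral.integral_of_le zero_le_one,
    intervalIntegral.integral_comp_sub_left]
  simp

lemma tendsto_integral_mul_deriv_edgeCutoff {F : ℝ → ℝ} {a b : ℝ} (hF : IntegrableOn F (Ioo 0 1))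
    (ha : Tendsto F (𝓝[>] 0 ⊓ ae volume) (𝓝 a)) (hb : Tendsto F (𝓝[<] 1 ⊓ ae volume) (𝓝 b)) :
    Tendsto (fun n => ∫ x in Ioo (0 : ℝ) 1, F x * deriv (edgeCutoff n) x) atTop (𝓝 (a - b)) := by
  have h2 := tendsto_integral_mul_edgeKernel (integrableOn_reflect hF)
    (hb.comp tendsto_reflect_nhdsGT_inf_ae)
  refine ((tendsto_integral_mul_edgeKernel hF ha).sub h2).congr fun n => ?_
  have h3 : IntegrableOn (fun x => F x * edgeKernel n (1 - x)) (Ioo 0 1) := by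
    simpa using integrableOn_reflect (integrableOn_mul_edgeKernel (integrableOn_reflect hF) n)
  rw [← integral_reflect (fun x => F (1 - x) * edgeKernel n x)]
  simp only [sub_sub_cancel]
  rw [← integral_sub (integrableOn_mul_edgeKernel hF n) h3]
  exact integral_congr_ae (ae_of_all _ fun x => by
    simp only [(hasDerivAt_edgeCutoff n x).deriv]; ring)

lemma volume_restrict_unitSquare : (volume : Measure (ℝ × ℝ)).restrict unitSquare
    = (volume.restrict (Ioo (0 : ℝ) 1)).prod (volume.restrict (Ioo (0 : ℝ) 1)) := by
  rw [Measure.prod_restrict, unitSquare, Measure.volume_eq_prod]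

lemma integral_unitSquare {G : ℝ × ℝ → ℝ} (hG : IntegrableOn G unitSquare) :
    ∫ z in unitSquare, G z = ∫ x in Ioo (0 : ℝ) 1, ∫ y in Ioo (0 : ℝ) 1, G (x, y) := by
  rw [IntegrableOn, volume_restrict_unitSquare] at hG
  rw [volume_restrict_unitSquare, integral_prod _ hG]

lemma integral_unitSquare_symm {G : ℝ × ℝ → ℝ} (hG : IntegrableOn G unitSquare) :
    ∫ z in unitSquare, G z = ∫ y in Ioo (0 : ℝ) 1, ∫ x in Ioo (0 : ℝ) 1, G (x, y) := by
  rw [IntegrableOn, volume_restrict_unitSquare] at hG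
  rw [volume_restrict_unitSquare, integral_prod_symm _ hG]

lemma eventually_nhdsGT_inf_ae {p : ℝ → Prop} (h : ∀ᵐ x ∂volume.restrict (Ioo (0 : ℝ) 1), p x) :
    ∀ᶠ x in 𝓝[>] (0 : ℝ) ⊓ ae volume, p x := by
  rw [ae_restrict_iff' measurableSet_Ioo] at h
  filter_upwards [mem_inf_of_left (Ioo_mem_nhdsGT (zero_lt_one' ℝ)), mem_inf_of_right h]
    with x hx hp using hp hx

lemma eventually_nhdsLT_inf_ae {p : ℝ → Prop} (h : ∀ᵐ x ∂volume.restrict (Ioo (0 : ℝ) 1), p x) :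
    ∀ᶠ x in 𝓝[<] (1 : ℝ) ⊓ ae volume, p x := by
  rw [ae_restrict_iff' measurableSet_Ioo] at h
  filter_upwards [mem_inf_of_left (Ioo_mem_nhdsLT (zero_lt_one' ℝ)), mem_inf_of_right h]
    with x hx hp using hp hx

lemma tendsto_integral_slice_mul {l : Filter ℝ} {v : ℝ → ℝ → ℝ} {h φ : ℝ → ℝ} {C : ℝ}
    (hv : ∀ᶠ t in l, IntegrableOn (v t) (Ioo 0 1)) (hh : IntegrableOn h (Ioo 0 1))
    (hφ : Continuous φ) (hC : ∀ x, |φ x| ≤ C)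
    (ht : Tendsto (fun t => ∫ x in (0 : ℝ)..1, |v t x - h x|) l (𝓝 0)) :
    Tendsto (fun t => ∫ x in Ioo (0 : ℝ) 1, v t x * φ x) l
      (𝓝 (∫ x in Ioo (0 : ℝ) 1, h x * φ x)) := by
  have hmul : ∀ f : ℝ → ℝ, IntegrableOn f (Ioo 0 1) →
      IntegrableOn (fun x => f x * φ x) (Ioo 0 1) := fun f hf =>
    Integrable.mul_bdd (c := C) hf hφ.aestronglyMeasurable (ae_of_all _ hC)
  rw [tendsto_iff_dist_tendsto_zero]
  have hlim : Tendsto (fun t => (∫ x in (0 : ℝ)..1, |v t x - h x|) * C) l (𝓝 0) := by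
    simpa using ht.mul_const C
  refine squeeze_zero' (Eventually.of_forall fun _ => dist_nonneg) ?_ hlim
  filter_upwards [hv] with t hvt
  rw [Real.dist_eq, ← integral_sub (hmul _ hvt) (hmul _ hh), ← Real.norm_eq_abs,
    intervalIntegral.integral_of_le zero_le_one, integral_Ioc_eq_integral_Ioo,
    ← integral_mul_const]
  refine norm_integral_le_of_norm_le ((hvt.sub hh).abs.mul_const C) (ae_of_all _ fun x => ?_)
  rw [← sub_mul, norm_mul]
  exact mul_le_mul_of_nonneg_left (hC x) (abs_nonneg _)

/-- A scalar test function on `Ω`: of class `C¹` with compact support in `Ω`. -/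
def IsTest {E : Type*} [NormedAddCommGroup E] [NormedSpace ℝ E] (Ω : Set E) (ξ : E → ℝ) : Prop :=
  ContDiff ℝ 1 ξ ∧ HasCompactSupport ξ ∧ tsupport ξ ⊆ Ω

lemma IsTest.of_eq_zero {φ : ℝ → ℝ} {a b : ℝ} (hφ : ContDiff ℝ 1 φ) (ha : 0 < a) (hb : b < 1)
    (h : ∀ x, x ∉ Icc a b → φ x = 0) : IsTest (Ioo 0 1) φ :=
  ⟨hφ, HasCompactSupport.intro isCompact_Icc h,
    (closure_minimal (Function.support_subset_iff'.2 h) isClosed_Icc).trans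
      fun _ hx => ⟨ha.trans_le hx.1, hx.2.trans_lt hb⟩⟩

lemma isTest_edgeCutoff {n : ℕ} (hn : 4 ≤ n) : IsTest (Ioo 0 1) (edgeCutoff n) := by
  have hn0 : (0 : ℝ) < 1 / n := by
    have : (4 : ℝ) ≤ n := by exact_mod_cast hn
    positivity
  exact .of_eq_zero (contDiff_edgeCutoff n) hn0 (by linarith)
    fun x hx => edgeCutoff_eq_zero_of_notMem hn hx

lemma isTest_edgeKernel {n : ℕ} (hn : 4 ≤ n) : IsTest (Ioo 0 1) (edgeKernel n) := by
  have hn' : (4 : ℝ) ≤ n := by exact_mod_cast hn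
  have hn0 : (0 : ℝ) < n := by linarith
  refine .of_eq_zero (a := 1 / n) (b := 2 / n) (contDiff_edgeKernel n) (by positivity)
    (by rw [div_lt_one hn0]; linarith) fun x hx => ?_
  rw [mem_Icc, not_and_or, not_le, not_le, lt_div_iff₀' hn0, div_lt_iff₀' hn0] at hx
  exact hx.elim edgeKernel_of_lt_one edgeKernel_of_two_lt

lemma IsTest.contDiff_mul {Ω : Set ℝ} {φ ψ : ℝ → ℝ} (hφ : IsTest Ω φ) (hψ : ContDiff ℝ 1 ψ) :
    IsTest Ω (fun x => ψ x * φ x) :=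
  ⟨hψ.mul hφ.1, hφ.2.1.mul_left, (tsupport_mul_subset_right).trans hφ.2.2⟩

lemma IsTest.exists_abs_le {E : Type*} [NormedAddCommGroup E] [NormedSpace ℝ E] {Ω : Set E}
    {ξ : E → ℝ} (hξ : IsTest Ω ξ) : ∃ C, 0 < C ∧ ∀ z, |ξ z| ≤ C := by
  obtain ⟨C, hC⟩ := hξ.2.1.exists_bound_of_continuous hξ.1.continuous
  exact ⟨|C| + 1, by positivity, fun z => (hC z).trans (by linarith [le_abs_self C])⟩

lemma IsTest.const_mul {E : Type*} [NormedAddCommGroup E] [NormedSpace ℝ E] {Ω : Set E}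
    {ξ : E → ℝ} (hξ : IsTest Ω ξ) (c : ℝ) : IsTest Ω (fun z => c * ξ z) :=
  ⟨contDiff_const.mul hξ.1, hξ.2.1.mul_left, (tsupport_mul_subset_right).trans hξ.2.2⟩

lemma isTest_tensor {φ ψ : ℝ → ℝ} (hφ : IsTest (Ioo 0 1) φ) (hψ : IsTest (Ioo 0 1) ψ) :
    IsTest unitSquare (fun z : ℝ × ℝ => φ z.1 * ψ z.2) := by
  have hc : IsCompact (tsupport φ ×ˢ tsupport ψ) := IsCompact.prod hφ.2.1 hψ.2.1
  have hs : Function.support (fun z : ℝ × ℝ => φ z.1 * ψ z.2) ⊆ tsupport φ ×ˢ tsupport ψ := by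
    intro z hz
    exact ⟨subset_tsupport _ (left_ne_zero_of_mul hz), subset_tsupport _ (right_ne_zero_of_mul hz)⟩
  exact ⟨(hφ.1.comp contDiff_fst).mul (hψ.1.comp contDiff_snd), .of_support_subset_isCompact hc hs,
    (closure_minimal hs hc.isClosed).trans (prod_mono hφ.2.2 hψ.2.2)⟩

lemma fderiv_tensor {φ ψ : ℝ → ℝ} (hφ : ContDiff ℝ 1 φ) (hψ : ContDiff ℝ 1 ψ) (z v : ℝ × ℝ) :
    fderiv ℝ (fun z : ℝ × ℝ => φ z.1 * ψ z.2) z v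
      = v.1 * (deriv φ z.1 * ψ z.2) + v.2 * (φ z.1 * deriv ψ z.2) := by
  have h1 : HasFDerivAt (fun z : ℝ × ℝ => φ z.1) (deriv φ z.1 • ContinuousLinearMap.fst ℝ ℝ ℝ) z :=
    (hφ.differentiable (by simp) z.1).hasDerivAt.comp_hasFDerivAt z hasFDerivAt_fst
  have h2 : HasFDerivAt (fun z : ℝ × ℝ => ψ z.2) (deriv ψ z.2 • ContinuousLinearMap.snd ℝ ℝ ℝ) z :=
    (hψ.differentiable (by simp) z.2).hasDerivAt.comp_hasFDerivAt z hasFDerivAt_snd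
  rw [show fderiv ℝ (fun z : ℝ × ℝ => φ z.1 * ψ z.2) z = _ from (h1.mul h2).fderiv]
  simp
  ring

lemma IsTest.integrableOn_mul_fderiv {ξ u : ℝ × ℝ → ℝ} (hξ : IsTest unitSquare ξ)
    (hu : IntegrableOn u unitSquare) (e : ℝ × ℝ) :
    IntegrableOn (fun z => u z * fderiv ℝ ξ z e) unitSquare := by
  have hcont : Continuous (fun z => fderiv ℝ ξ z e) :=
    (hξ.1.continuous_fderiv (by simp)).clm_apply continuous_const
  obtain ⟨C, hC⟩ := (hξ.2.1.fderiv_apply ℝ e).exists_bound_of_continuous hcont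
  exact Integrable.mul_bdd (c := C) hu hcont.aestronglyMeasurable (ae_of_all _ hC)

lemma add_le_totalVar {u ξ η : ℝ × ℝ → ℝ} (hu : IsBVOn unitSquare u) (hξ : IsTest unitSquare ξ)
    (hη : IsTest unitSquare η) (hξ1 : ∀ z, |ξ z| ≤ 1) (hη1 : ∀ z, |η z| ≤ 1) {s c : ℝ}
    (hsc : s ^ 2 + c ^ 2 ≤ 1) :
    s * (∫ z in unitSquare, u z * fderiv ℝ ξ z (1, 0))
      + c * (∫ z in unitSquare, u z * fderiv ℝ η z (0, 1)) ≤ totalVar unitSquare u := by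
  have h1 := hξ.const_mul s
  have h2 := hη.const_mul c
  have hs : Function.support (fun z => (s * ξ z, c * η z)) ⊆ tsupport ξ ∪ tsupport η := by
    intro z hz
    by_contra hc
    rw [mem_union, not_or] at hc
    exact hz (by simp [image_eq_zero_of_notMem_tsupport hc.1, image_eq_zero_of_notMem_tsupport hc.2])
  have hcpt : IsCompact (tsupport ξ ∪ tsupport η) := IsCompact.union hξ.2.1 hη.2.1
  refine le_csSup hu.2 ⟨fun z => (s * ξ z, c * η z), h1.1.prodMk h2.1,
    .of_support_subset_isCompact hcpt hs,
    (closure_minimal hs hcpt.isClosed).trans (union_subset hξ.2.2 hη.2.2), fun z => ?_, ?_⟩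
  · have e1 := sq_le_one_iff_abs_le_one (ξ z) |>.2 (hξ1 z)
    have e2 := sq_le_one_iff_abs_le_one (η z) |>.2 (hη1 z)
    simp only [mul_pow]
    nlinarith [sq_nonneg s, sq_nonneg c]
  · rw [← integral_const_mul, ← integral_const_mul, ← integral_add
      ((hξ.integrableOn_mul_fderiv hu.1 _).const_mul s)
      ((hη.integrableOn_mul_fderiv hu.1 _).const_mul c)]
    refine integral_congr_ae (ae_of_all _ fun z => ?_)
    have d1 := hξ.1.differentiable (by simp) z
    have d2 := hη.1.differentiable (by simp) z
    simp only []
    rw [(d1.hasFDerivAt.const_mul s |>.prodMk (d2.hasFDerivAt.const_mul c)).fderiv]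
    simp
    ring

lemma tendsto_integral_edgeCutoff_mul {F : ℝ → ℝ} (hF : IntegrableOn F (Ioo 0 1)) :
    Tendsto (fun n => ∫ x in Ioo (0 : ℝ) 1, F x * edgeCutoff n x) atTop
      (𝓝 (∫ x in Ioo (0 : ℝ) 1, F x)) := by
  refine tendsto_integral_of_dominated_convergence (fun x => |F x|)
    (fun n => hF.1.mul (contDiff_edgeCutoff n).continuous.aestronglyMeasurable) hF.abs
    (fun n => ae_of_all _ fun x => ?_) ?_
  · rw [norm_mul]
    exact mul_le_of_le_one_right (abs_nonneg _) (abs_edgeCutoff_le n x)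
  · filter_upwards [ae_restrict_mem measurableSet_Ioo] with x hx
    simpa using (tendsto_edgeCutoff hx).const_mul (F x)

section Slices

variable {u : ℝ × ℝ → ℝ} {M : Set ℝ}

lemma integrableOn_fst_slice (hu : IntegrableOn u unitSquare) :
    ∀ᵐ x ∂volume.restrict (Ioo (0 : ℝ) 1), IntegrableOn (fun y => u (x, y)) (Ioo 0 1) := by
  rw [IntegrableOn, volume_restrict_unitSquare] at hu
  exact hu.prod_right_ae

lemma integrableOn_snd_slice (hu : IntegrableOn u unitSquare) :
    ∀ᵐ y ∂volume.restrict (Ioo (0 : ℝ) 1), IntegrableOn (fun x => u (x, y)) (Ioo 0 1) := by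
  rw [IntegrableOn, volume_restrict_unitSquare] at hu
  exact hu.prod_left_ae

lemma integrableOn_mul_comp {φ : ℝ × ℝ → ℝ} {C : ℝ} (hu : IntegrableOn u unitSquare)
    (hφ : Continuous φ) (hC : ∀ z, |φ z| ≤ C) : IntegrableOn (fun z => u z * φ z) unitSquare :=
  Integrable.mul_bdd (c := C) hu hφ.aestronglyMeasurable (ae_of_all _ hC)

lemma integrableOn_integral_fst {G : ℝ × ℝ → ℝ} (hG : IntegrableOn G unitSquare) :
    IntegrableOn (fun x => ∫ y in Ioo (0 : ℝ) 1, G (x, y)) (Ioo 0 1) := by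
  rw [IntegrableOn, volume_restrict_unitSquare] at hG
  exact hG.integral_prod_left

lemma integrableOn_integral_snd {G : ℝ × ℝ → ℝ} (hG : IntegrableOn G unitSquare) :
    IntegrableOn (fun y => ∫ x in Ioo (0 : ℝ) 1, G (x, y)) (Ioo 0 1) := by
  rw [IntegrableOn, volume_restrict_unitSquare] at hG
  exact hG.integral_prod_right

lemma integrableOn_indicator_one (hM : MeasurableSet M) :
    IntegrableOn (M.indicator (1 : ℝ → ℝ)) (Ioo 0 1) :=
  (integrableOn_const (C := (1 : ℝ)) (by simp)).indicator hM

lemma integral_indicator_one_Ioo (hM : MeasurableSet M) (hM1 : M ⊆ Icc 0 1) :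
    ∫ x in Ioo (0 : ℝ) 1, M.indicator (1 : ℝ → ℝ) x = volume.real M := by
  rw [← integral_Icc_eq_integral_Ioo, integral_indicator_one hM, measureReal_restrict_apply hM,
    inter_eq_left.2 hM1]

lemma volumeReal_mul_add_le_totalVar (hM : MeasurableSet M) (hM1 : M ⊆ Icc 0 1)
    (hu : IsBVOn unitSquare u) (htr : HasSquareTraceIndicator u M) {ξ : ℝ × ℝ → ℝ}
    (hξ : IsTest unitSquare ξ) (hξ1 : ∀ z, |ξ z| ≤ 1) {s c : ℝ} (hsc : s ^ 2 + c ^ 2 ≤ 1) :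
    s * (∫ z in unitSquare, u z * fderiv ℝ ξ z (1, 0)) + c * volume.real M
      ≤ totalVar unitSquare u := by
  have key : ∀ m : ℕ, 4 ≤ m → s * (∫ z in unitSquare, u z * fderiv ℝ ξ z (1, 0))
      + c * (∫ x in Ioo (0 : ℝ) 1, M.indicator 1 x * edgeCutoff m x) ≤ totalVar unitSquare u := by
    intro m hm
    have hint := integrableOn_mul_comp (φ := fun z => edgeCutoff m z.1) hu.1
      ((contDiff_edgeCutoff m).continuous.comp continuous_fst) (fun z => abs_edgeCutoff_le m z.1)
    have h0 := tendsto_integral_slice_mul (v := fun t x => u (x, t)) (φ := edgeCutoff m)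
      (eventually_nhdsGT_inf_ae (integrableOn_snd_slice hu.1)) (integrableOn_indicator_one hM)
      (contDiff_edgeCutoff m).continuous (abs_edgeCutoff_le m) (htr.1.mono_left inf_le_left)
    have h1 := tendsto_integral_slice_mul (v := fun t x => u (x, t)) (φ := edgeCutoff m)
      (h := fun _ => 0) (eventually_nhdsLT_inf_ae (integrableOn_snd_slice hu.1))
      (integrable_zero _ _ _) (contDiff_edgeCutoff m).continuous (abs_edgeCutoff_le m)
      (by simpa using htr.2.1.mono_left inf_le_left)
    simp only [zero_mul, integral_zero] at h1
    have hlim := tendsto_integral_mul_deriv_edgeCutoff (integrableOn_integral_snd hint) h0 h1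
    rw [sub_zero] at hlim
    refine le_of_tendsto ((hlim.const_mul c).const_add _) ?_
    filter_upwards [eventually_ge_atTop 4] with n hn
    have ht := isTest_tensor (isTest_edgeCutoff hm) (isTest_edgeCutoff hn)
    have hle := add_le_totalVar hu hξ ht hξ1 (fun z => by
      rw [abs_mul]
      exact mul_le_one₀ (abs_edgeCutoff_le m _) (abs_nonneg _) (abs_edgeCutoff_le n _)) hsc
    rw [integral_unitSquare_symm (ht.integrableOn_mul_fderiv hu.1 _)] at hle
    refine le_of_eq_of_le ?_ hle
    congr 2
    refine integral_congr_ae (ae_of_all _ fun y => ?_)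
    simp only [← integral_mul_const]
    refine integral_congr_ae (ae_of_all _ fun x => ?_)
    simp only [fderiv_tensor (contDiff_edgeCutoff m) (contDiff_edgeCutoff n)]
    ring
  have hlim := tendsto_integral_edgeCutoff_mul (integrableOn_indicator_one hM)
  rw [integral_indicator_one_Ioo hM hM1] at hlim
  exact le_of_tendsto ((hlim.const_mul c).const_add _)
    ((eventually_ge_atTop 4).mono fun m hm => key m hm)

lemma integral_mul_fderiv_eq_zero (hM : MeasurableSet M) (hM1 : M ⊆ Icc 0 1)
    (hu : IsBVOn unitSquare u) (htr : HasSquareTraceIndicator u M)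
    (hle : totalVar unitSquare u ≤ volume.real M) {ξ : ℝ × ℝ → ℝ} (hξ : IsTest unitSquare ξ) :
    ∫ z in unitSquare, u z * fderiv ℝ ξ z (1, 0) = 0 := by
  have key : ∀ ξ : ℝ × ℝ → ℝ, IsTest unitSquare ξ → (∀ z, |ξ z| ≤ 1) →
      ∫ z in unitSquare, u z * fderiv ℝ ξ z (1, 0) ≤ 0 := by
    intro ξ hξ hξ1
    set A := ∫ z in unitSquare, u z * fderiv ℝ ξ z (1, 0)
    set m := volume.real M
    have hm : 0 ≤ m := measureReal_nonneg
    by_contra! hA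
    obtain ⟨t, ht, htm⟩ : ∃ t, 0 < t ∧ t * (m + 1) = A :=
      ⟨A / (m + 1), by positivity, by field_simp⟩
    have h := volumeReal_mul_add_le_totalVar hM hM1 hu htr hξ hξ1
      (s := 2 * t / (1 + t ^ 2)) (c := (1 - t ^ 2) / (1 + t ^ 2)) (by
        rw [div_pow, div_pow, ← add_div, div_le_one (by positivity)]
        exact le_of_eq (by ring))
    replace h := h.trans hle
    rw [div_mul_eq_mul_div, div_mul_eq_mul_div, ← add_div, div_le_iff₀ (by positivity)] at h
    change 2 * t * A + (1 - t ^ 2) * m ≤ m * (1 + t ^ 2) at h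
    nlinarith [mul_pos ht ht]
  obtain ⟨C, hC0, hC⟩ := hξ.exists_abs_le
  have hb : ∀ c : ℝ, |c| = C⁻¹ →
      c * ∫ z in unitSquare, u z * fderiv ℝ ξ z (1, 0) ≤ 0 := by
    intro c hc
    have := key _ (hξ.const_mul c) fun z => by
      rw [abs_mul, hc, inv_mul_le_one₀ hC0]
      exact hC z
    rw [← integral_const_mul]
    refine le_of_eq_of_le (integral_congr_ae (ae_of_all _ fun z => ?_)) this
    simp only []
    rw [fderiv_const_mul (hξ.1.differentiable (by simp) z)]
    simp
    ring
  have h1 := hb C⁻¹ (abs_of_pos (by positivity))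
  have h2 := hb (-C⁻¹) (by rw [abs_neg, abs_of_pos (by positivity)])
  have hC1 : 0 < C⁻¹ := by positivity
  nlinarith [mul_pos hC1 hC1]

lemma volumeReal_eq_zero_of_totalVar_le (hM : MeasurableSet M) (hM1 : M ⊆ Icc 0 1)
    (hu : IsBVOn unitSquare u) (htr : HasSquareTraceIndicator u M)
    (hle : totalVar unitSquare u ≤ volume.real M) : volume.real M = 0 := by
  have key : ∀ m : ℕ, 4 ≤ m →
      ∫ y in Ioo (0 : ℝ) 1, (∫ x in Ioo (0 : ℝ) 1, u (x, y)) * edgeKernel m y = 0 := by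
    intro m hm
    obtain ⟨C, -, hC⟩ := exists_edgeKernel_le m
    have hk := (contDiff_edgeKernel m).continuous
    have hint := integrableOn_mul_comp (φ := fun z => edgeKernel m z.2) hu.1
      (hk.comp continuous_snd) (fun z => hC z.2)
    set F : ℝ → ℝ := fun x => ∫ y in Ioo (0 : ℝ) 1, u (x, y) * edgeKernel m y with hFdef
    have hF : IntegrableOn F (Ioo 0 1) := integrableOn_integral_fst hint
    have h0 : Tendsto F (𝓝[>] 0 ⊓ ae volume) (𝓝 0) := by
      simpa using tendsto_integral_slice_mul (v := fun s y => u (s, y)) (h := fun _ => 0)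
        (eventually_nhdsGT_inf_ae (integrableOn_fst_slice hu.1)) (integrable_zero _ _ _) hk hC
        (by simpa using htr.2.2.1.mono_left inf_le_left)
    have h1 : Tendsto F (𝓝[<] 1 ⊓ ae volume) (𝓝 0) := by
      simpa using tendsto_integral_slice_mul (v := fun s y => u (s, y)) (h := fun _ => 0)
        (eventually_nhdsLT_inf_ae (integrableOn_fst_slice hu.1)) (integrable_zero _ _ _) hk hC
        (by simpa using htr.2.2.2.mono_left inf_le_left)
    have hxF : IntegrableOn (fun x => F x * x) (Ioo 0 1) := by
      refine Integrable.mul_bdd (c := 1) hF continuous_id.aestronglyMeasurable ?_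
      filter_upwards [ae_restrict_mem measurableSet_Ioo] with x hx
      exact (abs_of_pos hx.1).trans_le hx.2.le
    have hx0 : Tendsto (fun x => F x * x) (𝓝[>] 0 ⊓ ae volume) (𝓝 0) := by
      simpa using h0.mul (tendsto_id.mono_left (inf_le_left.trans nhdsWithin_le_nhds))
    have hx1 : Tendsto (fun x => F x * x) (𝓝[<] 1 ⊓ ae volume) (𝓝 0) := by
      simpa using h1.mul (tendsto_id.mono_left (inf_le_left.trans nhdsWithin_le_nhds))
    have hlim := (tendsto_integral_edgeCutoff_mul hF).add
      (tendsto_integral_mul_deriv_edgeCutoff hxF hx0 hx1)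
    have hzero : ∫ x in Ioo (0 : ℝ) 1, F x = 0 := by
      rw [sub_zero, add_zero] at hlim
      refine tendsto_nhds_unique hlim (tendsto_const_nhds.congr' ?_)
      filter_upwards [eventually_ge_atTop 4] with n hn
      have htest := (isTest_edgeCutoff hn).contDiff_mul (ψ := fun x => x) contDiff_id
      have ht := isTest_tensor htest (isTest_edgeKernel hm)
      have hz := integral_mul_fderiv_eq_zero hM hM1 hu htr hle ht
      rw [integral_unitSquare (ht.integrableOn_mul_fderiv hu.1 _)] at hz
      have hd : ∀ x, deriv (fun x => x * edgeCutoff n x) x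
          = edgeCutoff n x + x * deriv (edgeCutoff n) x := fun x => by
        have := ((hasDerivAt_id x).mul
          (hasDerivAt_edgeCutoff n x).differentiableAt.hasDerivAt).deriv
        simpa using! this
      have i1 : IntegrableOn (fun x => F x * edgeCutoff n x) (Ioo 0 1) :=
        Integrable.mul_bdd (c := 1) hF (contDiff_edgeCutoff n).continuous.aestronglyMeasurable
          (ae_of_all _ (abs_edgeCutoff_le n))
      have i2 : IntegrableOn (fun x => F x * x * deriv (edgeCutoff n) x) (Ioo 0 1) := by
        have hcd := (contDiff_edgeCutoff n).continuous_deriv (by simp)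
        obtain ⟨B, hB⟩ := (isTest_edgeCutoff hn).2.1.deriv.exists_bound_of_continuous hcd
        exact Integrable.mul_bdd (c := B) hxF hcd.aestronglyMeasurable (ae_of_all _ hB)
      rw [← integral_add i1 i2]
      refine hz.symm.trans (integral_congr_ae (ae_of_all _ fun x => ?_))
      simp only [fderiv_tensor htest.1 (contDiff_edgeKernel m), hd, hFdef]
      rw [mul_assoc, ← mul_add, ← integral_mul_const]
      refine integral_congr_ae (ae_of_all _ fun y => ?_)
      simp only []
      ring
    simp_rw [← integral_mul_const]
    rw [← integral_unitSquare_symm (G := fun z => u z * edgeKernel m z.2) hint,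
      integral_unitSquare hint]
    exact hzero
  have hG : Tendsto (fun y => ∫ x in Ioo (0 : ℝ) 1, u (x, y)) (𝓝[>] 0 ⊓ ae volume)
      (𝓝 (volume.real M)) := by
    have := tendsto_integral_slice_mul (v := fun t x => u (x, t)) (φ := fun _ => 1) (C := 1)
      (eventually_nhdsGT_inf_ae (integrableOn_snd_slice hu.1)) (integrableOn_indicator_one hM)
      continuous_const (by simp) (htr.1.mono_left inf_le_left)
    simpa only [mul_one, integral_indicator_one_Ioo hM hM1] using this
  refine tendsto_nhds_unique
    (tendsto_integral_mul_edgeKernel (integrableOn_integral_snd hu.1) hG)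
    (tendsto_const_nhds.congr' ?_)
  filter_upwards [eventually_ge_atTop 4] with m hm using (key m hm).symm

end Slices

lemma exists_isTest_integral_abs_sub_le {h : ℝ → ℝ} (hh : IntegrableOn h (Ioo 0 1)) {ε : ℝ}
    (hε : 0 < ε) :
    ∃ g, IsTest (Ioo 0 1) g ∧ ∫ x in Ioo (0 : ℝ) 1, |g x - h x| ≤ ε := by
  obtain ⟨g, hgc, hg, hle⟩ := (memLp_one_iff_integrable.2 hh).exist_eLpNorm_sub_le
    (by simp) le_rfl (half_pos hε)
  have hgI : IntegrableOn g (Ioo 0 1) :=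
    (hg.continuous.integrable_of_hasCompactSupport hgc).integrableOn
  have h1 : ∫ x in Ioo (0 : ℝ) 1, |h x - g x| ≤ ε / 2 := by
    rw [eLpNorm_one_eq_lintegral_enorm] at hle
    have := integral_norm_eq_lintegral_enorm (hh.sub hgI).1
    simp only [Pi.sub_apply, Real.norm_eq_abs] at this hle
    rw [this]
    exact ENNReal.toReal_le_of_le_ofReal (half_pos hε).le hle
  have hcut : ∀ n, IntegrableOn (fun x => g x * edgeCutoff n x) (Ioo 0 1) := fun n =>
    Integrable.mul_bdd (c := 1) hgI (contDiff_edgeCutoff n).continuous.aestronglyMeasurable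
      (ae_of_all _ (abs_edgeCutoff_le n))
  have h2 : Tendsto (fun n => ∫ x in Ioo (0 : ℝ) 1, |g x * edgeCutoff n x - g x|) atTop (𝓝 0) := by
    have := tendsto_integral_of_dominated_convergence (μ := volume.restrict (Ioo (0 : ℝ) 1))
      (F := fun n x => |g x * edgeCutoff n x - g x|) (f := fun _ => 0) (fun x => 2 * |g x|)
      (fun n => ((hcut n).sub hgI).abs.1) (hgI.abs.const_mul 2) (fun n => ae_of_all _ fun x => ?_) ?_
    · simpa using this
    · rw [Real.norm_eq_abs, abs_abs, two_mul]
      refine (abs_sub _ _).trans (add_le_add_left ?_ _)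
      rw [abs_mul]
      exact mul_le_of_le_one_right (abs_nonneg _) (abs_edgeCutoff_le n x)
    · filter_upwards [ae_restrict_mem measurableSet_Ioo] with x hx
      simpa using (((tendsto_edgeCutoff hx).const_mul (g x)).sub_const (g x)).abs
  obtain ⟨n, hn, hn4⟩ := ((h2.eventually_le_const (half_pos hε)).and (eventually_ge_atTop 4)).exists
  refine ⟨fun x => g x * edgeCutoff n x,
    (isTest_edgeCutoff hn4).contDiff_mul (hg.of_le (by exact_mod_cast le_top)), ?_⟩
  calc _ ≤ ∫ x in Ioo (0 : ℝ) 1, (|g x * edgeCutoff n x - g x| + |h x - g x|) := by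
        refine integral_mono ((hcut n).sub hh).abs (((hcut n).sub hgI).abs.add (hh.sub hgI).abs)
          fun x => ?_
        rw [abs_sub_comm (h x) (g x)]
        exact abs_sub_le _ _ _
    _ ≤ ε := by
        refine (integral_add ((hcut n).sub hgI).abs (hh.sub hgI).abs).trans_le ?_
        simp only [Pi.sub_apply]
        linarith

lemma IsTest.eq_zero {φ : ℝ → ℝ} (hφ : IsTest (Ioo 0 1) φ) {x : ℝ} (hx : x ∉ Ioo (0 : ℝ) 1) :
    φ x = 0 :=
  image_eq_zero_of_notMem_tsupport fun h => hx (hφ.2.2 h)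

lemma IsTest.eq_zero_of_notMem {ξ : ℝ × ℝ → ℝ} (hξ : IsTest unitSquare ξ) {z : ℝ × ℝ}
    (hz : z ∉ unitSquare) : ξ z = 0 :=
  image_eq_zero_of_notMem_tsupport fun h => hz (hξ.2.2 h)

lemma IsTest.sub {φ ψ : ℝ → ℝ} (hφ : IsTest (Ioo 0 1) φ) (hψ : IsTest (Ioo 0 1) ψ) :
    IsTest (Ioo 0 1) (fun x => φ x - ψ x) :=
  ⟨hφ.1.sub hψ.1, hφ.2.1.sub hψ.2.1,
    (tsupport_sub φ ψ).trans (union_subset hφ.2.2 hψ.2.2)⟩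

lemma IsTest.integrableOn {φ : ℝ → ℝ} (hφ : IsTest (Ioo 0 1) φ) : IntegrableOn φ (Ioo 0 1) :=
  (hφ.1.continuous.integrable_of_hasCompactSupport hφ.2.1).integrableOn

lemma integrableOn_layer {g : ℝ → ℝ} (hg : IsTest (Ioo 0 1) g) (t : ℝ) :
    IntegrableOn (fun z : ℝ × ℝ => g z.1 * (Iio t).indicator 1 z.2) unitSquare := by
  rw [IntegrableOn, volume_restrict_unitSquare]
  exact hg.integrableOn.mul_prod ((integrableOn_const (C := (1 : ℝ)) (by simp)).indicator
    measurableSet_Iio)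

lemma integral_layer_fst_le {g : ℝ → ℝ} (hg : IsTest (Ioo 0 1) g) {t : ℝ} (ht0 : 0 < t)
    (ht1 : t < 1) {ξ : ℝ × ℝ → ℝ} (hξ : IsTest unitSquare ξ) (hξ1 : ∀ z, |ξ z| ≤ 1) :
    ∫ z in unitSquare, (g z.1 * (Iio t).indicator 1 z.2) * fderiv ℝ ξ z (1, 0)
      ≤ t * ∫ x in Ioo (0 : ℝ) 1, |deriv g x| := by
  have hgd : Continuous (deriv g) := hg.1.continuous_deriv (by simp)
  have hgdI : IntegrableOn (deriv g) (Ioo 0 1) :=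
    (hgd.integrable_of_hasCompactSupport hg.2.1.deriv).integrableOn
  have hfc : Continuous (fun z => fderiv ℝ ξ z (1, 0)) :=
    (hξ.1.continuous_fderiv (by simp)).clm_apply continuous_const
  have inner : ∀ y, |∫ x in Ioo (0 : ℝ) 1, g x * fderiv ℝ ξ (x, y) (1, 0)|
      ≤ ∫ x in Ioo (0 : ℝ) 1, |deriv g x| := by
    intro y
    have hd : ∀ x, HasDerivAt (fun x => ξ (x, y)) (fderiv ℝ ξ (x, y) (1, 0)) x := fun x =>
      (hξ.1.differentiable (by simp) (x, y)).hasFDerivAt.comp_hasDerivAt x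
        ((hasDerivAt_id x).prodMk (hasDerivAt_const x y))
    have hparts := intervalIntegral.integral_mul_deriv_eq_deriv_mul (a := 0) (b := 1)
      (u := g) (v := fun x => ξ (x, y)) (fun x _ => (hg.1.differentiable (by simp) x).hasDerivAt)
      (fun x _ => hd x) (hgd.intervalIntegrable _ _)
      ((hfc.comp (by fun_prop : Continuous fun x : ℝ => (x, y))).intervalIntegrable _ _)
    rw [hg.eq_zero (x := 0) (by simp), hg.eq_zero (x := 1) (by simp), zero_mul, zero_mul, sub_zero,
      zero_sub, intervalIntegral.integral_of_le zero_le_one,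
      intervalIntegral.integral_of_le zero_le_one, integral_Ioc_eq_integral_Ioo,
      integral_Ioc_eq_integral_Ioo] at hparts
    rw [hparts, abs_neg, ← Real.norm_eq_abs]
    refine norm_integral_le_of_norm_le hgdI.abs (ae_of_all _ fun x => ?_)
    rw [norm_mul]
    exact mul_le_of_le_one_right (abs_nonneg _) (hξ1 _)
  rw [integral_unitSquare_symm (hξ.integrableOn_mul_fderiv (integrableOn_layer hg t) _)]
  have hχ : IntegrableOn ((Iio t).indicator (1 : ℝ → ℝ)) (Ioo 0 1) :=
    (integrableOn_const (C := (1 : ℝ)) (by simp)).indicator measurableSet_Iio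
  have hχt : ∫ y in Ioo (0 : ℝ) 1, (Iio t).indicator (1 : ℝ → ℝ) y = t := by
    rw [integral_indicator_one measurableSet_Iio, measureReal_restrict_apply measurableSet_Iio,
      inter_comm, Ioo_inter_Iio, min_eq_right ht1.le]
    simp [ht0.le]
  refine (le_abs_self _).trans ?_
  rw [← Real.norm_eq_abs]
  refine (norm_integral_le_of_norm_le (hχ.mul_const (∫ x in Ioo (0 : ℝ) 1, |deriv g x|))
    (ae_of_all _ fun y => ?_)).trans ?_
  · have heq : ∀ x, g x * (Iio t).indicator 1 y * fderiv ℝ ξ (x, y) (1, 0)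
        = (Iio t).indicator 1 y * (g x * fderiv ℝ ξ (x, y) (1, 0)) := fun x => by ring
    have hnn : (0 : ℝ) ≤ (Iio t).indicator 1 y := indicator_nonneg (fun _ _ => zero_le_one) y
    simp only [heq]
    rw [integral_const_mul, norm_mul, Real.norm_of_nonneg hnn]
    exact mul_le_mul_of_nonneg_left (inner y) hnn
  · rw [integral_mul_const, hχt]

lemma integral_layer_snd_le {g : ℝ → ℝ} (hg : IsTest (Ioo 0 1) g) {t : ℝ} (ht0 : 0 < t)
    (ht1 : t < 1) {ξ : ℝ × ℝ → ℝ} (hξ : IsTest unitSquare ξ) (hξ1 : ∀ z, |ξ z| ≤ 1) :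
    ∫ z in unitSquare, (g z.1 * (Iio t).indicator 1 z.2) * fderiv ℝ ξ z (0, 1)
      ≤ ∫ x in Ioo (0 : ℝ) 1, |g x| := by
  have hfc : Continuous (fun z => fderiv ℝ ξ z (0, 1)) :=
    (hξ.1.continuous_fderiv (by simp)).clm_apply continuous_const
  have inner : ∀ x, ∫ y in Ioo (0 : ℝ) 1, (Iio t).indicator 1 y * fderiv ℝ ξ (x, y) (0, 1)
      = ξ (x, t) := by
    intro x
    have hd : ∀ y, HasDerivAt (fun y => ξ (x, y)) (fderiv ℝ ξ (x, y) (0, 1)) y := fun y =>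
      (hξ.1.differentiable (by simp) (x, y)).hasFDerivAt.comp_hasDerivAt y
        ((hasDerivAt_const y x).prodMk (hasDerivAt_id y))
    have heq : ∀ y, (Iio t).indicator 1 y * fderiv ℝ ξ (x, y) (0, 1)
        = (Iio t).indicator (fun y => fderiv ℝ ξ (x, y) (0, 1)) y := fun y => by
      by_cases hy : y ∈ Iio t <;> simp [hy]
    simp only [heq]
    rw [setIntegral_indicator measurableSet_Iio, Ioo_inter_Iio, min_eq_right ht1.le,
      ← integral_Ioc_eq_integral_Ioo, ← intervalIntegral.integral_of_le ht0.le,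
      intervalIntegral.integral_eq_sub_of_hasDerivAt (fun y _ => hd y)
        ((hfc.comp (by fun_prop : Continuous fun y : ℝ => (x, y))).intervalIntegrable _ _),
      hξ.eq_zero_of_notMem (z := (x, 0)) (by simp [unitSquare]), sub_zero]
  rw [integral_unitSquare (hξ.integrableOn_mul_fderiv (integrableOn_layer hg t) _)]
  refine (le_abs_self _).trans ?_
  rw [← Real.norm_eq_abs]
  refine norm_integral_le_of_norm_le hg.integrableOn.abs (ae_of_all _ fun x => ?_)
  simp only [mul_assoc]
  rw [integral_const_mul, inner, norm_mul]
  exact mul_le_of_le_one_right (abs_nonneg _) (hξ1 _)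

lemma exists_pos_le_snd {K : Set (ℝ × ℝ)} (hK : IsCompact K) (hsub : K ⊆ unitSquare) :
    ∃ δ > 0, ∀ z ∈ K, δ ≤ z.2 := by
  rcases K.eq_empty_or_nonempty with rfl | hne
  · exact ⟨1, one_pos, by simp⟩
  · obtain ⟨z, hz, hmin⟩ := hK.exists_isMinOn hne continuous_snd.continuousOn
    exact ⟨z.2, (hsub hz).2.1, fun w hw => hmin hw⟩

lemma exists_layer_index {t : ℕ → ℝ} (hanti : Antitone t) (hlim : Tendsto t atTop (𝓝 0)) :
    ∃ N : ℝ → ℕ, Measurable N ∧ ∀ y k, k < N y ↔ 0 < y ∧ y < t k := by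
  classical
  have hex : ∀ y : ℝ, ∃ k, y ≤ 0 ∨ t k ≤ y := fun y => by
    rcases le_or_gt y 0 with h | h
    · exact ⟨0, .inl h⟩
    · obtain ⟨k, hk⟩ := (hlim.eventually_lt_const h).exists
      exact ⟨k, .inr hk.le⟩
  refine ⟨fun y => Nat.find (hex y), measurable_find hex fun k => ?_, fun y k => ?_⟩
  · exact measurableSet_Iic.union measurableSet_Ici
  · rw [Nat.lt_find_iff]
    simp only [not_or, not_le]
    exact ⟨fun h => h k le_rfl, fun h m hm => ⟨h.1, h.2.trans_le (hanti hm)⟩⟩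

lemma exists_antitone_le {a : ℕ → ℝ} (ha : ∀ k, 0 < a k) :
    ∃ t : ℕ → ℝ, Antitone t ∧ (∀ k, 0 < t k) ∧ (∀ k, t k ≤ a k) ∧ (∀ k, t k ≤ 1 / 2) ∧
      Tendsto t atTop (𝓝 0) := by
  have hpos : ∀ k, 0 < ∏ j ∈ Finset.range k, min (a j) (1 / 2) := fun k =>
    Finset.prod_pos fun j _ => lt_min (ha j) (by norm_num)
  have hle : ∀ k, ∏ j ∈ Finset.range k, min (a j) (1 / 2) ≤ (1 / 2 : ℝ) ^ k := fun k => by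
    simpa using Finset.prod_le_prod (s := Finset.range k) (g := fun _ => (1 / 2 : ℝ))
      (fun j _ => (lt_min (ha j) (by norm_num)).le) fun j _ => min_le_right (a j) _
  have hstep : ∀ k, ∏ j ∈ Finset.range (k + 1), min (a j) (1 / 2) ≤ min (a k) (1 / 2) :=
    fun k => by
    rw [Finset.prod_range_succ]
    exact mul_le_of_le_one_left (lt_min (ha k) (by norm_num)).le
      ((hle k).trans (pow_le_one₀ (by norm_num) (by norm_num)))
  refine ⟨fun k => ∏ j ∈ Finset.range (k + 1), min (a j) (1 / 2), ?_, fun k => hpos _,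
    fun k => (hstep k).trans (min_le_left _ _), fun k => (hstep k).trans (min_le_right _ _), ?_⟩
  · refine antitone_nat_of_succ_le fun k => ?_
    rw [Finset.prod_range_succ _ (k + 1)]
    exact mul_le_of_le_one_right (hpos _).le ((min_le_right _ _).trans (by norm_num))
  · exact squeeze_zero (fun k => (hpos _).le) (fun k => hle _)
      ((tendsto_add_atTop_iff_nat 1).2
        (tendsto_pow_atTop_nhds_zero_of_lt_one (by norm_num) (by norm_num)))

lemma integrableOn_inv_sqrt : IntegrableOn (fun y : ℝ => (√y)⁻¹) (Ioo 0 1) := by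
  have h := intervalIntegral.intervalIntegrable_rpow' (a := 0) (b := 1) (r := -(1 / 2 : ℝ))
    (by norm_num)
  rw [intervalIntegrable_iff_integrableOn_Ioo_of_le zero_le_one] at h
  refine h.congr_fun (fun y hy => ?_) measurableSet_Ioo
  simp only []
  rw [Real.rpow_neg hy.1.le, Real.sqrt_eq_rpow]

section Layers

variable {H : ℕ → ℝ → ℝ} {t : ℕ → ℝ} {N : ℝ → ℕ}

lemma layer_eq_sum (h0 : ∀ x, H 0 x = 0) (hN : ∀ y k, k < N y ↔ 0 < y ∧ y < t k)
    {K : ℕ} {z : ℝ × ℝ} (hz : 0 < z.2) (hK : N z.2 ≤ K) :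
    H (N z.2) z.1
      = ∑ k ∈ Finset.range K, (H (k + 1) z.1 - H k z.1) * (Iio (t k)).indicator 1 z.2 := by
  rw [← Finset.sum_subset (Finset.range_subset_range.2 hK)]
  · have : ∀ k ∈ Finset.range (N z.2), (H (k + 1) z.1 - H k z.1) * (Iio (t k)).indicator 1 z.2
        = H (k + 1) z.1 - H k z.1 := fun k hk => by
      have := ((hN _ _).1 (Finset.mem_range.1 hk)).2
      rw [indicator_of_mem (by exact this)]
      simp
    rw [Finset.sum_congr rfl this, Finset.sum_range_sub (fun k => H k z.1), h0, sub_zero]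
  · intro k _ hk
    rw [Finset.mem_range, hN, not_and] at hk
    rw [indicator_of_notMem (by exact hk hz), mul_zero]

lemma mem_varSet_layer_le (h0 : ∀ x, H 0 x = 0) (hH : ∀ k, IsTest (Ioo 0 1) (H k))
    (ht0 : ∀ k, 0 < t k) (ht1 : ∀ k, t k < 1) (hlim : Tendsto t atTop (𝓝 0))
    (hN : ∀ y k, k < N y ↔ 0 < y ∧ y < t k)
    {B : ℝ} (hB : ∀ K, ∑ k ∈ Finset.range K, ((∫ x in Ioo (0 : ℝ) 1, |H (k + 1) x - H k x|)
      + t k * ∫ x in Ioo (0 : ℝ) 1, |deriv (fun x => H (k + 1) x - H k x) x|) ≤ B)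
    {v : ℝ} (hv : v ∈ varSet unitSquare fun z => H (N z.2) z.1) : v ≤ B := by
  obtain ⟨ξ, hξ, hξc, hξQ, hξ1, rfl⟩ := hv
  have hT1 : IsTest unitSquare (fun z => (ξ z).1) :=
    ⟨contDiff_fst.comp hξ, hξc.comp_left (g := Prod.fst) rfl,
      (tsupport_comp_subset (g := Prod.fst) rfl ξ).trans hξQ⟩
  have hT2 : IsTest unitSquare (fun z => (ξ z).2) :=
    ⟨contDiff_snd.comp hξ, hξc.comp_left (g := Prod.snd) rfl,
      (tsupport_comp_subset (g := Prod.snd) rfl ξ).trans hξQ⟩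
  have hb1 : ∀ z, |(ξ z).1| ≤ 1 := fun z =>
    sq_le_one_iff_abs_le_one _ |>.1 (by nlinarith [hξ1 z, sq_nonneg (ξ z).2])
  have hb2 : ∀ z, |(ξ z).2| ≤ 1 := fun z =>
    sq_le_one_iff_abs_le_one _ |>.1 (by nlinarith [hξ1 z, sq_nonneg (ξ z).1])
  have hd : ∀ z, DifferentiableAt ℝ ξ z := hξ.differentiable (by simp)
  have hf1 : ∀ z e, (fderiv ℝ ξ z e).1 = fderiv ℝ (fun z => (ξ z).1) z e := fun z e => by
    rw [fderiv.fst (hd z)]; rfl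
  have hf2 : ∀ z e, (fderiv ℝ ξ z e).2 = fderiv ℝ (fun z => (ξ z).2) z e := fun z e => by
    rw [fderiv.snd (hd z)]; rfl
  simp only [hf1, hf2]
  obtain ⟨δ, hδ, hδK⟩ := exists_pos_le_snd hξc hξQ
  obtain ⟨K, hK⟩ := (hlim.eventually_lt_const hδ).exists
  have hg : ∀ k, IsTest (Ioo 0 1) (fun x => H (k + 1) x - H k x) := fun k => (hH _).sub (hH _)
  have hi1 := fun k => hT1.integrableOn_mul_fderiv (integrableOn_layer (hg k) (t k)) (1, 0)
  have hi2 := fun k => hT2.integrableOn_mul_fderiv (integrableOn_layer (hg k) (t k)) (0, 1)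
  have heq : ∫ z in unitSquare, (H (N z.2) z.1 * fderiv ℝ (fun z => (ξ z).1) z (1, 0)
        + H (N z.2) z.1 * fderiv ℝ (fun z => (ξ z).2) z (0, 1))
      = ∫ z in unitSquare, ∑ k ∈ Finset.range K,
        ((H (k + 1) z.1 - H k z.1) * (Iio (t k)).indicator 1 z.2
            * fderiv ℝ (fun z => (ξ z).1) z (1, 0)
          + (H (k + 1) z.1 - H k z.1) * (Iio (t k)).indicator 1 z.2
            * fderiv ℝ (fun z => (ξ z).2) z (0, 1)) := by
    refine integral_congr_ae (ae_of_all _ fun z => ?_)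
    simp only [← mul_add, ← Finset.sum_mul]
    by_cases hz : z ∈ tsupport ξ
    · have hzδ := hδK z hz
      rw [layer_eq_sum h0 hN (hδ.trans_le hzδ) (K := K)]
      by_contra! hc
      exact absurd ((hN _ _).1 hc).2 (not_lt.2 (hK.le.trans hzδ))
    · have hz0 : fderiv ℝ ξ z = 0 := fderiv_of_notMem_tsupport ℝ hz
      rw [← hf1, ← hf2, hz0]
      simp
  rw [heq]
  refine (integral_finsetSum _ fun k _ => (hi1 k).add (hi2 k)).trans_le ?_
  refine (Finset.sum_le_sum fun k _ => ?_).trans (hB K)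
  refine (integral_add (hi1 k) (hi2 k)).trans_le ?_
  rw [add_comm]
  exact add_le_add (integral_layer_snd_le (hg k) (ht0 k) (ht1 k) hT2 hb2)
    (integral_layer_fst_le (hg k) (ht0 k) (ht1 k) hT1 hb1)

lemma abs_layer_le (h0 : ∀ x, H 0 x = 0) (hN : ∀ y k, k < N y ↔ 0 < y ∧ y < t k)
    (hb : ∀ k x, t k * H (k + 1) x ^ 2 ≤ 1) {x y : ℝ} (hy : 0 < y) :
    |H (N y) x| ≤ (√y)⁻¹ := by
  cases hNy : N y with
  | zero => rw [h0, abs_zero]; positivity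
  | succ k =>
    have hk := ((hN y k).1 (by omega)).2
    rw [← Real.sqrt_inv]
    refine Real.abs_le_sqrt ?_
    rw [← one_div, le_div_iff₀ hy]
    nlinarith [hb k x, sq_nonneg (H (k + 1) x)]

end Layers

lemma exists_totalVar_le {M : Set ℝ} (hM : MeasurableSet M) (hM1 : M ⊆ Icc 0 1) {ε : ℝ}
    (hε : 0 < ε) :
    ∃ w, IsBVOn unitSquare w ∧ HasSquareTraceIndicator w M ∧
      totalVar unitSquare w ≤ volume.real M + 6 * ε := by
  set h : ℝ → ℝ := M.indicator 1
  have hh : IntegrableOn h (Ioo 0 1) := integrableOn_indicator_one hM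
  have habs : ∫ x in Ioo (0 : ℝ) 1, |h x| = volume.real M := by
    rw [← integral_indicator_one_Ioo hM hM1]
    congr with x
    exact abs_of_nonneg (indicator_nonneg (fun _ _ => zero_le_one) x)
  have hεk : ∀ k : ℕ, 0 < ε * (1 / 2) ^ k := fun k => by positivity
  choose f hf hfh using fun k => exists_isTest_integral_abs_sub_le hh (hεk k)
  set H : ℕ → ℝ → ℝ := fun k => if k = 0 then fun _ => 0 else f k with hHdef
  have h0 : ∀ x, H 0 x = 0 := fun x => by simp [hHdef]
  have hHs : ∀ k, k ≠ 0 → H k = f k := fun k hk => by simp [hHdef, hk]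
  have hH : ∀ k, IsTest (Ioo 0 1) (H k) := fun k => by
    rcases eq_or_ne k 0 with rfl | hk
    · simpa [hHdef] using (hf 0).const_mul 0
    · rw [hHs k hk]; exact hf k
  have hHh : ∀ k, k ≠ 0 → ∫ x in Ioo (0 : ℝ) 1, |H k x - h x| ≤ ε * (1 / 2) ^ k := fun k hk => by
    rw [hHs k hk]; exact hfh k
  choose S hS0 hS using fun k => (hH k).exists_abs_le
  set D : ℕ → ℝ := fun k => ∫ x in Ioo (0 : ℝ) 1, |deriv (fun x => H (k + 1) x - H k x) x|
  have hD : ∀ k, 0 ≤ D k := fun k => integral_nonneg fun _ => abs_nonneg _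
  obtain ⟨t, hanti, ht0, hta, ht2, hlim⟩ :=
    exists_antitone_le (a := fun k => min (ε * (1 / 2) ^ k / (D k + 1)) (1 / S (k + 1) ^ 2))
      fun k => lt_min (div_pos (hεk k) (by linarith [hD k]))
        (one_div_pos.2 (pow_pos (hS0 (k + 1)) 2))
  have htD : ∀ k, t k * D k ≤ ε * (1 / 2) ^ k := fun k => by
    have := (le_div_iff₀ (by linarith [hD k])).1 ((hta k).trans (min_le_left _ _))
    nlinarith [ht0 k]
  have htS : ∀ k x, t k * H (k + 1) x ^ 2 ≤ 1 := fun k x => by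
    have h1 := (le_div_iff₀ (pow_pos (hS0 (k + 1)) 2)).1 ((hta k).trans (min_le_right _ _))
    have h2 : H (k + 1) x ^ 2 ≤ S (k + 1) ^ 2 := sq_le_sq' (abs_le.1 (hS _ x)).1 (abs_le.1 (hS _ x)).2
    nlinarith [ht0 k]
  obtain ⟨N, hNm, hN⟩ := exists_layer_index hanti hlim
  have hbound : ∀ x y, 0 < y → |H (N y) x| ≤ (√y)⁻¹ := fun x y hy => abs_layer_le h0 hN htS hy
  have hmeas : Measurable (fun z : ℝ × ℝ => H (N z.2) z.1) :=
    (measurable_from_prod_countable_right (f := fun p : ℕ × ℝ => H p.1 p.2)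
      fun k => (hH k).1.continuous.measurable).comp ((hNm.comp measurable_snd).prodMk measurable_fst)
  have hint : IntegrableOn (fun z : ℝ × ℝ => H (N z.2) z.1) unitSquare := by
    have hb : IntegrableOn (fun z : ℝ × ℝ => (√z.2)⁻¹) unitSquare := by
      rw [IntegrableOn, volume_restrict_unitSquare]
      exact integrableOn_inv_sqrt.comp_snd _
    refine hb.mono' hmeas.aestronglyMeasurable ?_
    filter_upwards [ae_restrict_mem (measurableSet_Ioo.prod measurableSet_Ioo)] with z hz
    exact hbound _ _ hz.2.1
  have hsum : ∀ K, ∑ k ∈ Finset.range K, ((∫ x in Ioo (0 : ℝ) 1, |H (k + 1) x - H k x|)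
      + t k * D k) ≤ volume.real M + 6 * ε := by
    intro K
    have hterm : ∀ k, (∫ x in Ioo (0 : ℝ) 1, |H (k + 1) x - H k x|) + t k * D k
        ≤ (if k = 0 then volume.real M else 0) + 3 * (ε * (1 / 2) ^ k) := by
      intro k
      have i1 : IntegrableOn (fun x => |H (k + 1) x - h x|) (Ioo 0 1) :=
        ((hH (k + 1)).integrableOn.sub hh).abs
      have i2 : IntegrableOn (fun x => |H k x - h x|) (Ioo 0 1) := ((hH k).integrableOn.sub hh).abs
      have htri : ∫ x in Ioo (0 : ℝ) 1, |H (k + 1) x - H k x|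
          ≤ (∫ x in Ioo (0 : ℝ) 1, |H (k + 1) x - h x|) + ∫ x in Ioo (0 : ℝ) 1, |H k x - h x| := by
        rw [← integral_add i1 i2]
        refine integral_mono ((hH (k + 1)).integrableOn.sub (hH k).integrableOn).abs (i1.add i2)
          fun x => ?_
        simp only [Pi.add_apply]
        rw [abs_sub_comm (H k x)]
        exact abs_sub_le _ _ _
      have h1 := hHh (k + 1) (by omega)
      have h2 : ∫ x in Ioo (0 : ℝ) 1, |H k x - h x|
          ≤ (if k = 0 then volume.real M else 0) + ε * (1 / 2) ^ k := by
        split_ifs with hk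
        · subst hk
          simp only [h0, zero_sub, abs_neg, habs]
          linarith [hεk 0]
        · simpa using hHh k hk
      have h3 : ε * (1 / 2) ^ (k + 1) ≤ ε * (1 / 2) ^ k := by
        rw [pow_succ]; nlinarith [hεk k]
      linarith [htD k]
    refine (Finset.sum_le_sum fun k _ => hterm k).trans ?_
    rw [Finset.sum_add_distrib, ← Finset.mul_sum, ← Finset.mul_sum]
    have hg := sum_geometric_two_le K
    have hif : ∑ k ∈ Finset.range K, (if k = 0 then volume.real M else 0) ≤ volume.real M := by
      rw [Finset.sum_ite_eq']
      split_ifs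
      · exact le_rfl
      · exact measureReal_nonneg
    nlinarith
  have hvar : ∀ v ∈ varSet unitSquare (fun z : ℝ × ℝ => H (N z.2) z.1),
      v ≤ volume.real M + 6 * ε := fun v hv =>
    mem_varSet_layer_le h0 hH ht0 (fun k => (ht2 k).trans_lt (by norm_num)) hlim hN hsum hv
  have hside : ∀ (l : Filter ℝ) [l.IsCountablyGenerated] (a : ℝ), l ≤ 𝓝 a → a ∉ Ioo (0 : ℝ) 1 →
      Tendsto (fun s : ℝ => ∫ y in (0 : ℝ)..1, |H (N y) s|) l (𝓝 0) := by
    intro l _ a hl ha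
    have := intervalIntegral.tendsto_integral_filter_of_dominated_convergence (l := l) (a := 0)
      (b := 1) (μ := volume) (F := fun s y => |H (N y) s|) (f := fun _ => 0) (fun y => (√y)⁻¹)
      (Eventually.of_forall fun s => (hmeas.comp
        (measurable_const.prodMk measurable_id : Measurable fun y : ℝ => (s, y))).abs
          |>.aestronglyMeasurable)
      (Eventually.of_forall fun s => ae_of_all _ fun y hy => ?_)
      ((intervalIntegrable_iff_integrableOn_Ioo_of_le zero_le_one).2 integrableOn_inv_sqrt)
      (ae_of_all _ fun y _ => ?_)
    · simpa using this
    · rw [uIoc_of_le zero_le_one] at hy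
      rw [Real.norm_eq_abs, abs_abs]
      exact hbound _ _ hy.1
    · have hc : Tendsto (fun s => |H (N y) s|) (𝓝 a) (𝓝 |H (N y) a|) :=
        (hH (N y)).1.continuous.abs.tendsto a
      rw [(hH (N y)).eq_zero ha, abs_zero] at hc
      exact hc.mono_left hl
  refine ⟨fun z => H (N z.2) z.1, ⟨hint, _, hvar⟩, ⟨?_, ?_, ?_, ?_⟩, csSup_le ⟨0, fun _ => 0, ?_⟩ hvar⟩
  · have hNtop : Tendsto N (𝓝[>] 0) atTop := tendsto_atTop.2 fun K => by
      filter_upwards [Ioo_mem_nhdsGT (ht0 K)] with y hy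
      exact ((hN y K).2 hy).le
    have hL1 : Tendsto (fun k => ∫ x in (0 : ℝ)..1, |H k x - h x|) atTop (𝓝 0) := by
      have hz : Tendsto (fun k : ℕ => ε * (1 / 2 : ℝ) ^ k) atTop (𝓝 0) := by
        simpa using (tendsto_pow_atTop_nhds_zero_of_lt_one (r := (1 / 2 : ℝ)) (by norm_num)
          (by norm_num)).const_mul ε
      refine squeeze_zero' (Eventually.of_forall fun k =>
        intervalIntegral.integral_nonneg zero_le_one fun _ _ => abs_nonneg _) ?_ hz
      filter_upwards [eventually_ne_atTop 0] with k hk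
      rw [intervalIntegral.integral_of_le zero_le_one, integral_Ioc_eq_integral_Ioo]
      exact hHh k hk
    exact hL1.comp hNtop
  · refine tendsto_const_nhds.congr' ?_
    filter_upwards [Ioo_mem_nhdsLT (show (1 / 2 : ℝ) < 1 by norm_num)] with y hy
    have : N y = 0 := by
      by_contra hc
      exact absurd ((hN y 0).1 (by omega)).2 (not_lt.2 ((ht2 0).trans hy.1.le))
    simp [this, h0]
  · exact hside _ 0 nhdsWithin_le_nhds (by simp)
  · exact hside _ 1 nhdsWithin_le_nhds (by simp)
  · exact ⟨contDiff_const, HasCompactSupport.zero, by simp [tsupport], by simp, by simp⟩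

/-- for any measurable `M̃ ⊆ [0,1]` of positive Lebesgue measure, the
least gradient problem on `Q = (0,1)²` with boundary datum `1_{M̃ × {0}}` admits no
minimizer: there is no BV function with this trace whose total variation is least. -/
theorem stmt4 (M : Set ℝ) (hM : MeasurableSet M) (hM1 : M ⊆ Icc 0 1)
    (hMpos : 0 < volume M) :
    ¬ ∃ u₀ : ℝ × ℝ → ℝ, IsBVOn unitSquare u₀ ∧ HasSquareTraceIndicator u₀ M ∧
      ∀ w : ℝ × ℝ → ℝ, IsBVOn unitSquare w → HasSquareTraceIndicator w M →
        totalVar unitSquare u₀ ≤ totalVar unitSquare w := by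
  rintro ⟨u, hu, htr, hmin⟩
  have hle : totalVar unitSquare u ≤ volume.real M := by
    refine le_of_forall_pos_le_add fun ε hε => ?_
    obtain ⟨w, hw, hwtr, hwle⟩ := exists_totalVar_le hM hM1 (ε := ε / 6) (by positivity)
    linarith [hmin w hw hwtr]
  have hfin : volume M ≠ ⊤ := ((measure_mono hM1).trans_lt (by simp)).ne
  exact (ENNReal.toReal_pos hMpos.ne' hfin).ne'
    (volumeReal_eq_zero_of_totalVar_le hM hM1 hu htr hle)
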